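/- Consider a solvable system of bipolar max-product fuzzy relation equations max_{j=1..m} max(a_{ij}^+ · x_j, a_{ij}^- · n_P(x_j)) = b_i, i ∈ {1,...,n}, let S^+ = {J^+ ⊆ {1,...,m} : (J^+, J^-) is a feasible pair for some J^- ⊆ {1,...,m}}, and let M^+ be the set of maximal elements of S^+ with respect to set inclusion. For J^+ ⊆ {1,...,m}, let f(J^+) be the tuple whose j-th component is 0 if j ∉ J^+ and min{b_h ←_P a_{hj}^+ : h ∈ {1,...,n}} if j ∈ J^+. Then f restricted to M^+ is a bijection from M^+ onto the set of maximal solutions of the system; in particular, the set of maximal solutions of the system equals {f(J^+) : J^+ ∈ M^+}, and the number of maximal solutions of the system coincides with the number of maximal elements of S^+. -/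

import Mathlib

open Finset
open scoped Classical

/-- Product negation: `nP 0 = 1`, `nP x = 0` for `x ≠ 0`. -/
noncomputable def nP (x : ℝ) : ℝ := if x = 0 then 1 else 0

/-- Residuated implication of the product: `resP z x = min 1 (z / x)` for `x > 0`,
and `resP z 0 = 1`. -/
noncomputable def resP (z x : ℝ) : ℝ := if x = 0 then 1 else min 1 (z / x)

/-- Left-hand side of a bipolar max-product fuzzy relation equation:
`max_{j=1..m} max (a_j^+ * x_j) (a_j^- * nP (x_j))`. -/
noncomputable def eqLHS {m : ℕ} (hm : 0 < m) (ap an : Fin m → ℝ) (x : Fin m → ℝ) : ℝ :=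
  Finset.univ.sup' ⟨⟨0, hm⟩, Finset.mem_univ _⟩
    (fun j => max (ap j * x j) (an j * nP (x j)))

/-- `x` is a solution of the system of bipolar max-product FREs with coefficient
matrices `ap`, `an` and independent terms `b`. -/
def SysSol {m n : ℕ} (hm : 0 < m) (ap an : Fin n → Fin m → ℝ) (b : Fin n → ℝ)
    (x : Fin m → ℝ) : Prop :=
  (∀ j, x j ∈ Set.Icc (0:ℝ) 1) ∧ ∀ i, eqLHS hm (ap i) (an i) x = b i

/-- `(Jp, Jm)` is a feasible pair of index sets with respect to the system. -/
def FeasiblePair {m n : ℕ} (ap an : Fin n → Fin m → ℝ) (b : Fin n → ℝ)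
    (Jp Jm : Finset (Fin m)) : Prop :=
  Jp ∪ Jm = Finset.univ ∧ Jp ∩ Jm = ∅ ∧
    ∀ i,
      (b i = 0 → (∀ j ∈ Jp, ap i j = 0) ∧ ∀ j ∈ Jm, an i j = 0) ∧
      (0 < b i →
        (∃ j ∈ Jp, b i ≤ ap i j ∧ ∀ h, resP (b i) (ap i j) ≤ resP (b h) (ap h j)) ∨
        (∃ j ∈ Jm, an i j = b i ∧ ∀ h, an h j ≤ b h))

lemma le_resP_iff {a b x : ℝ} (ha : 0 ≤ a) (hb : 0 ≤ b) (hx : x ≤ 1) :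
    x ≤ resP b a ↔ a * x ≤ b := by
  unfold resP
  split_ifs with h
  · simp [h, hb, hx]
  · have ha' : 0 < a := lt_of_le_of_ne ha (Ne.symm h)
    rw [le_min_iff, le_div_iff₀ ha', mul_comm x a]
    simp [hx]

lemma resP_le_one (b a : ℝ) : resP b a ≤ 1 := by
  unfold resP
  split_ifs
  · exact le_rfl
  · exact min_le_left _ _

lemma eqLHS_eq_iff {m : ℕ} (hm : 0 < m) (ap an x : Fin m → ℝ) (c : ℝ) :
    eqLHS hm ap an x = c ↔ (∀ j, ap j * x j ≤ c ∧ an j * nP (x j) ≤ c) ∧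
      ∃ j, ap j * x j = c ∨ an j * nP (x j) = c := by
  unfold eqLHS
  constructor
  · rintro rfl
    refine ⟨fun j => ?_, ?_⟩
    · exact max_le_iff.1 (Finset.le_sup' (fun j => max (ap j * x j) (an j * nP (x j)))
        (Finset.mem_univ j))
    · obtain ⟨j, -, hj⟩ := Finset.exists_mem_eq_sup' (⟨⟨0, hm⟩, Finset.mem_univ _⟩ :
        (Finset.univ : Finset (Fin m)).Nonempty) (fun j => max (ap j * x j) (an j * nP (x j)))
      refine ⟨j, ?_⟩
      rw [hj]
      rcases max_choice (ap j * x j) (an j * nP (x j)) with h | h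
      · exact Or.inl h.symm
      · exact Or.inr h.symm
  · rintro ⟨h1, j, hj⟩
    apply le_antisymm
    · exact Finset.sup'_le _ _ fun k _ => max_le (h1 k).1 (h1 k).2
    · have h2 := Finset.le_sup' (fun j => max (ap j * x j) (an j * nP (x j)))
        (Finset.mem_univ j)
      refine le_trans ?_ h2
      rcases hj with hj | hj
      · exact hj ▸ le_max_left _ _
      · exact hj ▸ le_max_right _ _

/-- Support of a solution gives a feasible pair. -/
lemma feasible_of_sol {m n : ℕ} (hm : 0 < m)
    (ap an : Fin n → Fin m → ℝ) (b : Fin n → ℝ)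
    (hap : ∀ i j, ap i j ∈ Set.Icc (0:ℝ) 1) (han : ∀ i j, an i j ∈ Set.Icc (0:ℝ) 1)
    (hb : ∀ i, b i ∈ Set.Icc (0:ℝ) 1) (x : Fin m → ℝ) (hx : SysSol hm ap an b x) :
    FeasiblePair ap an b (univ.filter fun j => x j ≠ 0) (univ.filter fun j => x j = 0) := by
  obtain ⟨h01, hs⟩ := hx
  have hs' := fun i => (eqLHS_eq_iff hm _ _ _ _).1 (hs i)
  refine ⟨by ext j; simp; tauto, by ext j; simp, fun i => ⟨fun h0 => ⟨?_, ?_⟩, fun hpos => ?_⟩⟩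
  · intro j hj
    have hj : x j ≠ 0 := by simpa using hj
    have h1 := ((hs' i).1 j).1
    have hxp : 0 < x j := lt_of_le_of_ne (h01 j).1 (Ne.symm hj)
    have := (hap i j).1
    by_contra hne
    have : 0 < ap i j := lt_of_le_of_ne this (Ne.symm hne)
    have := mul_pos this hxp
    linarith
  · intro j hj
    have hj : x j = 0 := by simpa using hj
    have h1 := ((hs' i).1 j).2
    have := (han i j).1
    simp [hj, nP] at h1
    linarith
  · obtain ⟨j, hj | hj⟩ := (hs' i).2
    · left
      have hxne : x j ≠ 0 := by
        intro h; rw [h] at hj; simp at hj; linarith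
      have hane : ap i j ≠ 0 := by
        intro h; rw [h] at hj; simp at hj; linarith
      refine ⟨j, by simpa using hxne, ?_, fun h => ?_⟩
      · rw [← hj]
        exact mul_le_of_le_one_right (hap i j).1 (h01 j).2
      · have e : resP (b i) (ap i j) ≤ x j := by
          unfold resP
          rw [if_neg hane, ← hj, mul_div_cancel_left₀ _ hane]
          exact min_le_right _ _
        exact e.trans ((le_resP_iff (hap h j).1 (hb h).1 (h01 j).2).2 ((hs' h).1 j).1)
    · right
      have hx0 : x j = 0 := by
        by_contra h
        simp [nP, h] at hj; linarith
      simp only [hx0, nP, if_true, mul_one] at hj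
      refine ⟨j, by simpa using hx0, hj, fun h => ?_⟩
      simpa [hx0, nP] using ((hs' h).1 j).2

/-- Main existence lemma with the upper envelope `g` abstracted. -/
lemma sol_of_max {m n : ℕ} (hm : 0 < m)
    (ap an : Fin n → Fin m → ℝ) (b : Fin n → ℝ)
    (hap : ∀ i j, ap i j ∈ Set.Icc (0:ℝ) 1) (han : ∀ i j, an i j ∈ Set.Icc (0:ℝ) 1)
    (hb : ∀ i, b i ∈ Set.Icc (0:ℝ) 1)
    (hsolv : ∃ x, SysSol hm ap an b x)
    (g : Fin m → ℝ) (hg1 : ∀ j h, g j ≤ resP (b h) (ap h j))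
    (hg2 : ∀ j, ∃ h, g j = resP (b h) (ap h j)) (Jp : Finset (Fin m))
    (hpos : ∀ j ∈ Jp, 0 < g j)
    (hJ : ∃ Jm, FeasiblePair ap an b Jp Jm)
    (hmax : ∀ K : Finset (Fin m), (∃ Jm, FeasiblePair ap an b K Jm) → ¬ Jp ⊂ K) :
    SysSol hm ap an b (fun j => if j ∈ Jp then g j else 0) := by
  obtain ⟨Jm, hU, hI, hF⟩ := hJ
  have hJm : ∀ j, j ∈ Jm ↔ j ∉ Jp := by
    intro j
    have h1 := Finset.ext_iff.1 hU j
    have h2 := Finset.ext_iff.1 hI j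
    simp at h1 h2
    tauto
  have hgle : ∀ j, g j ≤ 1 := fun j => by
    obtain ⟨h, e⟩ := hg2 j
    rw [e]; exact resP_le_one _ _
  -- key: negative coefficients outside `Jp` are bounded
  have key : ∀ j, j ∉ Jp → ∀ i, an i j ≤ b i := by
    intro j hj i
    by_contra hlt
    push Not at hlt
    obtain ⟨x, h01, hs⟩ := hsolv
    have hs' := fun i => (eqLHS_eq_iff hm _ _ _ _).1 (hs i)
    have hxne : x j ≠ 0 := by
      intro h
      have := ((hs' i).1 j).2
      simp [h, nP] at this
      linarith
    have hxp : 0 < x j := lt_of_le_of_ne (h01 j).1 (Ne.symm hxne)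
    refine hmax (insert j Jp) ⟨Jm.erase j, ?_, ?_, fun k => ⟨fun h0 => ⟨?_, ?_⟩, fun hp => ?_⟩⟩
      (Finset.ssubset_insert hj)
    · ext k; simp [hJm]; tauto
    · ext k; simp [hJm]; tauto
    · intro l hl
      rcases Finset.mem_insert.1 hl with rfl | hl
      · have h1 := ((hs' k).1 l).1
        by_contra hne
        have : 0 < ap k l := lt_of_le_of_ne (hap k l).1 (Ne.symm hne)
        have := mul_pos this hxp
        linarith
      · exact ((hF k).1 h0).1 l hl
    · intro l hl
      exact ((hF k).1 h0).2 l (Finset.mem_of_mem_erase hl)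
    · rcases (hF k).2 hp with ⟨l, hl, h⟩ | ⟨l, hl, h1, h2⟩
      · exact Or.inl ⟨l, Finset.mem_insert_of_mem hl, h⟩
      · refine Or.inr ⟨l, Finset.mem_erase.2 ⟨?_, hl⟩, h1, h2⟩
        rintro rfl
        exact absurd (h2 i) (not_le.2 hlt)
  refine ⟨fun j => ?_, fun i => (eqLHS_eq_iff hm _ _ _ _).2 ⟨fun j => ?_, ?_⟩⟩
  · dsimp only
    split_ifs with h
    · exact ⟨(hpos j h).le, hgle j⟩
    · simp
  · skip
    split_ifs with h
    · refine ⟨(le_resP_iff (hap i j).1 (hb i).1 (hgle j)).1 (hg1 j i), ?_⟩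
      simp [nP, (hpos j h).ne', (hb i).1]
    · refine ⟨by simpa using (hb i).1, ?_⟩
      simpa [nP] using key j h i
  · skip
    rcases (hb i).1.eq_or_lt with h0 | hp
    · have hz := (hF i).1 h0.symm
      refine ⟨⟨0, hm⟩, ?_⟩
      by_cases h : (⟨0, hm⟩ : Fin m) ∈ Jp
      · left; rw [hz.1 _ h, ← h0, zero_mul]
      · right; rw [hz.2 _ ((hJm _).2 h), ← h0, zero_mul]
    · rcases (hF i).2 hp with ⟨j, hj, hle, hh⟩ | ⟨j, hj, h1, -⟩
      · refine ⟨j, Or.inl ?_⟩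
        rw [if_pos hj]
        have e : g j = resP (b i) (ap i j) := by
          apply le_antisymm (hg1 j i)
          obtain ⟨h, e⟩ := hg2 j
          rw [e]; exact hh h
        have ha : 0 < ap i j := hp.trans_le hle
        rw [e, resP, if_neg ha.ne', min_eq_right ((div_le_one ha).2 hle)]
        field_simp
      · refine ⟨j, Or.inr ?_⟩
        rw [if_neg ((hJm j).1 hj)]
        simpa [nP] using h1

lemma pos_of_feasible {m n : ℕ} 
    (ap an : Fin n → Fin m → ℝ) (b : Fin n → ℝ)
    (hap : ∀ i j, ap i j ∈ Set.Icc (0:ℝ) 1)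
    (hb : ∀ i, b i ∈ Set.Icc (0:ℝ) 1)
    (g : Fin m → ℝ)
    (hg2 : ∀ j, ∃ h, g j = resP (b h) (ap h j)) (Jp : Finset (Fin m))
    (hJ : ∃ Jm, FeasiblePair ap an b Jp Jm) : ∀ j ∈ Jp, 0 < g j := by
  intro j hj
  obtain ⟨Jm, -, -, hF⟩ := hJ
  obtain ⟨h, e⟩ := hg2 j
  rw [e, resP]
  split_ifs with h0
  · exact one_pos
  · have ha : 0 < ap h j := lt_of_le_of_ne (hap h j).1 (Ne.symm h0)
    have hbp : 0 < b h := by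
      refine lt_of_le_of_ne (hb h).1 fun hz => h0 ((hF h).1 hz.symm |>.1 j hj)
    exact lt_min one_pos (div_pos hbp ha)

lemma main_bij {m n : ℕ} (hm : 0 < m)
    (ap an : Fin n → Fin m → ℝ) (b : Fin n → ℝ)
    (hap : ∀ i j, ap i j ∈ Set.Icc (0:ℝ) 1) (han : ∀ i j, an i j ∈ Set.Icc (0:ℝ) 1)
    (hb : ∀ i, b i ∈ Set.Icc (0:ℝ) 1)
    (hsolv : ∃ x, SysSol hm ap an b x)
    (g : Fin m → ℝ) (hg1 : ∀ j h, g j ≤ resP (b h) (ap h j))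
    (hg2 : ∀ j, ∃ h, g j = resP (b h) (ap h j)) :
    Set.BijOn
      (fun (Jp : Finset (Fin m)) (j : Fin m) => if j ∈ Jp then g j else 0)
      {Jp : Finset (Fin m) | (∃ Jm, FeasiblePair ap an b Jp Jm) ∧
        ∀ K : Finset (Fin m), (∃ Jm, FeasiblePair ap an b K Jm) → ¬ Jp ⊂ K}
      {x : Fin m → ℝ | SysSol hm ap an b x ∧ ∀ y, SysSol hm ap an b y → ¬ x < y} := by
  have hle : ∀ x, SysSol hm ap an b x → ∀ j, x j ≤ g j := by
    rintro x ⟨h01, hs⟩ j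
    obtain ⟨h, e⟩ := hg2 j
    rw [e, le_resP_iff (hap h j).1 (hb h).1 (h01 j).2]
    exact (((eqLHS_eq_iff hm _ _ _ _).1 (hs h)).1 j).1
  have hpos := pos_of_feasible ap an b hap hb g hg2
  refine ⟨?_, ?_, ?_⟩
  · rintro J ⟨hJ, hmax⟩
    refine ⟨sol_of_max hm ap an b hap han hb hsolv g hg1 hg2 J (hpos J hJ) hJ hmax, ?_⟩
    intro y hy hlt
    have hF := feasible_of_sol hm ap an b hap han hb y hy
    have hsub : J ⊆ univ.filter fun j => y j ≠ 0 := by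
      intro j hj
      have h1 := hlt.le j
      have h2 := hpos J hJ j hj
      simp only [if_pos hj] at h1
      simpa using (h2.trans_le h1).ne'
    have heq : J = univ.filter fun j => y j ≠ 0 := by
      by_contra hne
      exact hmax _ ⟨_, hF⟩ (hsub.ssubset_of_ne hne)
    refine hlt.not_ge fun j => ?_
    by_cases hj : j ∈ J
    · simpa [hj] using hle y hy j
    · have : y j = 0 := by rw [heq] at hj; simpa using hj
      simp [hj, this]
  · rintro J ⟨hJ, -⟩ K ⟨hK, -⟩ e
    ext j
    have := congrFun e j
    have h1 := hpos J hJ j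
    have h2 := hpos K hK j
    dsimp only at this
    constructor
    · intro hj
      by_contra hk
      rw [if_pos hj, if_neg hk] at this
      exact (h1 hj).ne' this
    · intro hk
      by_contra hj
      rw [if_pos hk, if_neg hj] at this
      exact (h2 hk).ne this
  · rintro x ⟨hx, hmax⟩
    have hF := feasible_of_sol hm ap an b hap han hb x hx
    obtain ⟨K, hJK, hK⟩ := (Set.toFinite {J : Finset (Fin m) |
      ∃ Jm, FeasiblePair ap an b J Jm}).exists_le_maximal ⟨_, hF⟩
    have hKm : ∀ L : Finset (Fin m), (∃ Jm, FeasiblePair ap an b L Jm) → ¬ K ⊂ L :=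
      fun L hL hlt => hK.not_gt hL hlt
    refine ⟨K, ⟨hK.prop, hKm⟩, ?_⟩
    have hs := sol_of_max hm ap an b hap han hb hsolv g hg1 hg2 K (hpos K hK.prop) hK.prop hKm
    have hxle : x ≤ fun j => if j ∈ K then g j else 0 := by
      intro j
      by_cases hj : j ∈ K
      · simpa [hj] using hle x hx j
      · have : x j = 0 := by
          by_contra h
          exact hj (hJK (by simpa using h))
        simp [hj, this]
    by_contra hne
    exact hmax _ hs (lt_of_le_of_ne hxle (Ne.symm hne))

theorem stmt14 (m n : ℕ) (hm : 0 < m) (hn : 0 < n)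
    (ap an : Fin n → Fin m → ℝ) (b : Fin n → ℝ)
    (hap : ∀ i j, ap i j ∈ Set.Icc (0:ℝ) 1) (han : ∀ i j, an i j ∈ Set.Icc (0:ℝ) 1)
    (hb : ∀ i, b i ∈ Set.Icc (0:ℝ) 1)
    (hsolv : ∃ x, SysSol hm ap an b x) :
    Set.BijOn
      (fun (Jp : Finset (Fin m)) (j : Fin m) =>
        if j ∈ Jp then Finset.univ.inf' ⟨⟨0, hn⟩, Finset.mem_univ _⟩ (fun h => resP (b h) (ap h j)) else 0)
      {Jp : Finset (Fin m) | (∃ Jm, FeasiblePair ap an b Jp Jm) ∧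
        ∀ K : Finset (Fin m), (∃ Jm, FeasiblePair ap an b K Jm) → ¬ Jp ⊂ K}
      {x : Fin m → ℝ | SysSol hm ap an b x ∧ ∀ y, SysSol hm ap an b y → ¬ x < y} ∧
    (fun (Jp : Finset (Fin m)) (j : Fin m) =>
        if j ∈ Jp then Finset.univ.inf' ⟨⟨0, hn⟩, Finset.mem_univ _⟩ (fun h => resP (b h) (ap h j)) else 0) ''
      {Jp : Finset (Fin m) | (∃ Jm, FeasiblePair ap an b Jp Jm) ∧
        ∀ K : Finset (Fin m), (∃ Jm, FeasiblePair ap an b K Jm) → ¬ Jp ⊂ K} =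
      {x : Fin m → ℝ | SysSol hm ap an b x ∧ ∀ y, SysSol hm ap an b y → ¬ x < y} ∧
    {Jp : Finset (Fin m) | (∃ Jm, FeasiblePair ap an b Jp Jm) ∧
        ∀ K : Finset (Fin m), (∃ Jm, FeasiblePair ap an b K Jm) → ¬ Jp ⊂ K}.ncard =
      {x : Fin m → ℝ | SysSol hm ap an b x ∧ ∀ y, SysSol hm ap an b y → ¬ x < y}.ncard := by
  have h := main_bij hm ap an b hap han hb hsolv
    (fun j => Finset.univ.inf' ⟨⟨0, hn⟩, Finset.mem_univ _⟩ (fun h => resP (b h) (ap h j)))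
    (fun j h => Finset.inf'_le (fun h => resP (b h) (ap h j)) (Finset.mem_univ h))
    (fun j => by
      obtain ⟨h, -, e⟩ := Finset.exists_mem_eq_inf' (⟨⟨0, hn⟩, Finset.mem_univ _⟩ :
        (Finset.univ : Finset (Fin n)).Nonempty) (fun h => resP (b h) (ap h j))
      exact ⟨h, e⟩)
  refine ⟨h, h.image_eq, ?_⟩
  rw [← h.image_eq]
  exact (Set.InjOn.ncard_image h.injOn).symm
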